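/- arXiv:2012.03384 — 2 statements merged into one kernel-verified Lean document; each statement's English description precedes it below -/
import Mathlib

section
/- Let $A \in \mathbb{R}^{n \times n}$, $B \in \mathbb{R}^{n \times m}$, $H \in \mathbb{R}^{o \times n}$, and suppose the observability matrix $\mathcal{O} = [H^T, (HA)^T, \dots, (HA^{n-1})^T]^T$ has full column rank. Let $\mathcal{Z} \subset \mathbb{R}^o$ and $\mathcal{U} \subset \mathbb{R}^m$ be compact sets, and fix an integer $\bar i \geq n-1$. Then: (i) the set $S = \{\bar x_0 \in \mathbb{R}^n \mid \exists\, \bar u_0,\dots,\bar u_{\bar i - 1} \in \mathcal{U} \text{ such that the trajectory } \bar x_{i+1} = A\bar x_i + B\bar u_i \text{ satisfies } H\bar x_i \in \mathcal{Z} \text{ for } i = 0,\dots,\bar i\}$ is bounded; consequently each coordinate supremum $b_{\bar x, l} = \sup_{x \in S} h_{\bar x, l}^T x$ over the rows $h_{\bar x, l}^T$ of $H_{\bar x} = [I, -I]^T$ is finite and the hyper-rectangle $\bar{\mathcal{X}} = \{\bar x \mid H_{\bar x} \bar x \leq b_{\bar x}\}$ is compact; and (ii) any sequence $(\bar x_k,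 \bar u_k)_{k \geq \underline{k}}$ satisfying $\bar x_{k+1} = A \bar x_k + B \bar u_k$, $\bar u_k \in \mathcal{U}$, and $H \bar x_k \in \mathcal{Z}$ for all $k \geq \underline{k}$ satisfies $\bar x_k \in \bar{\mathcal{X}}$ for all $k \geq \underline{k}$. -/
open Matrix

/-- The rows of `H_x̄ = [I, -I]ᵀ`: the standard basis vectors and their negatives. -/
noncomputable def Hrow (n : ℕ) : (Fin n ⊕ Fin n) → (Fin n → ℝ) :=
  Sum.elim (fun j => Pi.single j 1) (fun j => -Pi.single j 1)

/-- The set `S` of initial ROM states `x̄₀` from which there exists an admissible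
control sequence (in `U`) of length `ī` keeping the performance outputs in `Z`
for `i = 0, …, ī`. -/
def reachSet {n m o : ℕ} (A : Matrix (Fin n) (Fin n) ℝ) (B : Matrix (Fin n) (Fin m) ℝ)
    (H : Matrix (Fin o) (Fin n) ℝ) (Z : Set (Fin o → ℝ)) (U : Set (Fin m → ℝ))
    (ibar : ℕ) : Set (Fin n → ℝ) :=
  {x0 | ∃ x : ℕ → Fin n → ℝ, ∃ u : ℕ → Fin m → ℝ,
    x 0 = x0 ∧ (∀ i < ibar, u i ∈ U) ∧
    (∀ i < ibar, x (i + 1) = A.mulVec (x i) + B.mulVec (u i)) ∧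
    (∀ i ≤ ibar, H.mulVec (x i) ∈ Z)}

/-- The coordinate suprema `b_{x̄,l} = sup_{x ∈ S} h_{x̄,l}ᵀ x` over the rows of `H_x̄`. -/
noncomputable def bbar {n m o : ℕ} (A : Matrix (Fin n) (Fin n) ℝ) (B : Matrix (Fin n) (Fin m) ℝ)
    (H : Matrix (Fin o) (Fin n) ℝ) (Z : Set (Fin o → ℝ)) (U : Set (Fin m → ℝ))
    (ibar : ℕ) : (Fin n ⊕ Fin n) → ℝ :=
  fun l => sSup ((fun x => Hrow n l ⬝ᵥ x) '' reachSet A B H Z U ibar)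

/-- The hyper-rectangle `X̄ = {x̄ : H_x̄ x̄ ≤ b_x̄}`. -/
def Xbar {n m o : ℕ} (A : Matrix (Fin n) (Fin n) ℝ) (B : Matrix (Fin n) (Fin m) ℝ)
    (H : Matrix (Fin o) (Fin n) ℝ) (Z : Set (Fin o → ℝ)) (U : Set (Fin m → ℝ))
    (ibar : ℕ) : Set (Fin n → ℝ) :=
  {x | ∀ l : Fin n ⊕ Fin n, Hrow n l ⬝ᵥ x ≤ bbar A B H Z U ibar l}

/-!
Along a trajectory with inputs in `U`, the state `xᵢ` differs from the free response `Aⁱ x₀` by an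
element of the set reachable from the origin in `i` steps, which is bounded because `U` is. Hence
each `H Aⁱ x₀` with `i ≤ ī` differs from an element of `Z` by an element of a bounded set.
Observability says that these vectors determine `x₀` linearly and injectively, and an injective
linear map out of a finite-dimensional space reflects boundedness, so `S` is bounded.
The states of an infinite admissible trajectory all lie in `S`, since each of them starts an
admissible trajectory of length `ī`.
-/

open Bornology
open scoped Pointwise

section Boundedness

variable {𝕜 E : Type*} [NontriviallyNormedField 𝕜] [CompleteSpace 𝕜]
  [NormedAddCommGroup E] [NormedSpace 𝕜 E] [FiniteDimensional 𝕜 E]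

lemma isBounded_image_linearMap {F : Type*} [NormedAddCommGroup F] [NormedSpace 𝕜 F]
    (f : E →ₗ[𝕜] F) {s : Set E} (hs : IsBounded s) :
    IsBounded (f '' s) :=
  hs.image f.toContinuousLinearMap

lemma isBounded_of_forall_isBounded_image_linearMap {κ : Type*} [Finite κ] {F : κ → Type*}
    [∀ k, NormedAddCommGroup (F k)] [∀ k, NormedSpace 𝕜 (F k)] (f : ∀ k, E →ₗ[𝕜] F k)
    (hf : ∀ x, (∀ k, f k x = 0) → x = 0) {s : Set E} (hs : ∀ k, IsBounded (f k '' s)) :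
    IsBounded s := by
  cases nonempty_fintype κ
  have ker_pi_eq_bot : LinearMap.ker (LinearMap.pi f) = ⊥ :=
    LinearMap.ker_eq_bot'.2 fun x hx => hf x fun k => congrFun hx k
  obtain ⟨K, -, antilipschitz⟩ := LinearMap.exists_antilipschitzWith _ ker_pi_eq_bot
  have isBounded_image_pi : IsBounded (LinearMap.pi f '' s) :=
    forall_isBounded_image_eval_iff.1 fun k => (Set.image_image _ _ s).symm ▸ hs k
  exact (antilipschitz.isBounded_preimage isBounded_image_pi).subset (Set.subset_preimage_image _ s)

lemma bddAbove_image_dotProduct {ι : Type*} [Fintype ι] {s : Set (ι → ℝ)} (hs : IsBounded s)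
    (v : ι → ℝ) : BddAbove ((fun x => v ⬝ᵥ x) '' s) :=
  (isBounded_image_linearMap (dotProductBilin ℝ ℝ v) hs).bddAbove

end Boundedness

section Observability

variable {R ι ο : Type*} [CommRing R] [Fintype ι]

lemma mulVec_injective_of_rank_eq_card [Nontrivial R] {κ : Type*} {M : Matrix κ ι R}
    (hM : M.rank = Fintype.card ι) : Function.Injective M.mulVec := by
  rw [mulVec_injective_iff, linearIndependent_iff_card_eq_finrank_span,
    ← hM, rank_eq_finrank_span_cols, Set.finrank]

variable [DecidableEq ι]

/-- The pair `(A, H)` is observable within `N` steps: a state whose free outputs `H Aⁱ x` vanish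
for `i = 0, …, N` is zero. Over a field, and with `N + 1` at least the state dimension, this is the
full column rank condition on the observability matrix. -/
def ObservableWithin (A : Matrix ι ι R) (H : Matrix ο ι R) (N : ℕ) : Prop :=
  ∀ x, (∀ i ≤ N, (H * A ^ i) *ᵥ x = 0) → x = 0

/-- The observability matrix `[Hᵀ, (HA)ᵀ, …, (HA^{N-1})ᵀ]ᵀ`, with the row `r` of the block `H Aⁱ`
indexed by `(i, r)`. -/
def observabilityMatrix (A : Matrix ι ι R) (H : Matrix ο ι R) (N : ℕ) :
    Matrix (Fin N × ο) ι R :=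
  of fun p j => (H * A ^ (p.1 : ℕ)) p.2 j

lemma observableWithin_of_rank_observabilityMatrix [Nontrivial R]
    {A : Matrix ι ι R} {H : Matrix ο ι R} {N k : ℕ}
    (hrank : (observabilityMatrix A H N).rank = Fintype.card ι) (hk : N - 1 ≤ k) :
    ObservableWithin A H k := by
  intro x hx
  apply mulVec_injective_of_rank_eq_card hrank
  rw [mulVec_zero]
  ext ⟨i, r⟩
  exact congrFun (hx i (by lia)) r

end Observability

section ForcedStates

variable {ι μ : Type*} [Fintype ι] [Fintype μ]

/-- The states reachable from the origin in exactly `i` steps of `x⁺ = A x + B u` with inputs in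
`U`. -/
def forcedStates {R : Type*} [NonUnitalNonAssocSemiring R] (A : Matrix ι ι R) (B : Matrix ι μ R)
    (U : Set (μ → R)) : ℕ → Set (ι → R)
  | 0 => {0}
  | i + 1 => A.mulVec '' forcedStates A B U i + B.mulVec '' U

lemma isBounded_forcedStates {𝕜 : Type*} [NontriviallyNormedField 𝕜] [CompleteSpace 𝕜]
    (A : Matrix ι ι 𝕜) (B : Matrix ι μ 𝕜) {U : Set (μ → 𝕜)} (hU : IsBounded U) :
    ∀ i, IsBounded (forcedStates A B U i)
  | 0 => isBounded_singleton
  | i + 1 => (isBounded_image_linearMap A.mulVecLin (isBounded_forcedStates A B hU i)).add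
      (isBounded_image_linearMap B.mulVecLin hU)

lemma sub_pow_mulVec_mem_forcedStates {R : Type*} [Ring R] [DecidableEq ι]
    {A : Matrix ι ι R} {B : Matrix ι μ R} {U : Set (μ → R)} {x : ℕ → ι → R} {u : ℕ → μ → R} :
    ∀ {i : ℕ}, (∀ k < i, u k ∈ U) → (∀ k < i, x (k + 1) = A *ᵥ x k + B *ᵥ u k) →
      x i - (A ^ i) *ᵥ x 0 ∈ forcedStates A B U i
  | 0, _, _ => by simp [forcedStates]
  | i + 1, hu, hx => by
    have mem_forcedStates : x i - (A ^ i) *ᵥ x 0 ∈ forcedStates A B U i :=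
      sub_pow_mulVec_mem_forcedStates (fun k hk => hu k (by lia)) fun k hk => hx k (by lia)
    have eq_add : x (i + 1) - (A ^ (i + 1)) *ᵥ x 0 =
        A *ᵥ (x i - (A ^ i) *ᵥ x 0) + B *ᵥ u i := by
      rw [hx i i.lt_succ_self, mulVec_sub, mulVec_mulVec, ← pow_succ', add_sub_right_comm]
    rw [eq_add]
    exact Set.add_mem_add (Set.mem_image_of_mem _ mem_forcedStates)
      (Set.mem_image_of_mem _ (hu i i.lt_succ_self))

end ForcedStates

lemma setOf_forall_Hrow_dotProduct_le_eq_Icc {n : ℕ} (b : Fin n ⊕ Fin n → ℝ) :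
    {x | ∀ l, Hrow n l ⬝ᵥ x ≤ b l} = Set.Icc (fun j => -b (.inr j)) (fun j => b (.inl j)) := by
  ext x
  simp [Hrow, Pi.le_def, neg_le, and_comm]

section AdmissibleStates

variable {n m o : ℕ} {A : Matrix (Fin n) (Fin n) ℝ} {B : Matrix (Fin n) (Fin m) ℝ}
  {H : Matrix (Fin o) (Fin n) ℝ} {Z : Set (Fin o → ℝ)} {U : Set (Fin m → ℝ)} {ibar : ℕ}

lemma image_mulVec_reachSet_subset {i : ℕ} (hi : i ≤ ibar) :
    (H * A ^ i).mulVec '' reachSet A B H Z U ibar ⊆ Z - H.mulVec '' forcedStates A B U i := by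
  rintro _ ⟨_, ⟨x, u, rfl, hu, hx, hz⟩, rfl⟩
  have mem_forcedStates : x i - (A ^ i) *ᵥ x 0 ∈ forcedStates A B U i :=
    sub_pow_mulVec_mem_forcedStates (fun k hk => hu k (by lia)) fun k hk => hx k (by lia)
  refine ⟨H *ᵥ x i, hz i hi, _, Set.mem_image_of_mem _ mem_forcedStates, ?_⟩
  simp only [mulVec_sub, mulVec_mulVec, sub_sub_cancel]

lemma isBounded_reachSet (hobs : ObservableWithin A H ibar) (hZ : IsBounded Z)
    (hU : IsBounded U) : IsBounded (reachSet A B H Z U ibar) := by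
  refine isBounded_of_forall_isBounded_image_linearMap
    (fun i : Fin (ibar + 1) => (H * A ^ (i : ℕ)).mulVecLin)
    (fun x hx => hobs x fun i hi => hx ⟨i, by lia⟩) fun i => ?_
  have isBounded_forced : IsBounded (H.mulVec '' forcedStates A B U i) :=
    isBounded_image_linearMap H.mulVecLin (isBounded_forcedStates A B hU i)
  exact (hZ.sub isBounded_forced).subset (image_mulVec_reachSet_subset (by lia))

lemma isCompact_Xbar : IsCompact (Xbar A B H Z U ibar) := by
  rw [Xbar, setOf_forall_Hrow_dotProduct_le_eq_Icc]
  exact isCompact_Icc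

lemma reachSet_subset_Xbar (hS : IsBounded (reachSet A B H Z U ibar)) :
    reachSet A B H Z U ibar ⊆ Xbar A B H Z U ibar := fun _ hx l =>
  le_csSup (bddAbove_image_dotProduct hS (Hrow n l)) (Set.mem_image_of_mem _ hx)

lemma mem_reachSet_of_forall_ge {k : ℕ} {x : ℕ → Fin n → ℝ} {u : ℕ → Fin m → ℝ}
    (hx : ∀ i ≥ k, x (i + 1) = A *ᵥ x i + B *ᵥ u i) (hu : ∀ i ≥ k, u i ∈ U)
    (hz : ∀ i ≥ k, H *ᵥ x i ∈ Z) : x k ∈ reachSet A B H Z U ibar :=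
  ⟨fun i => x (k + i), fun i => u (k + i), rfl, fun i _ => hu _ (k.le_add_right i),
    fun i _ => hx _ (k.le_add_right i), fun i _ => hz _ (k.le_add_right i)⟩

end AdmissibleStates

theorem prop_Xbar_general
    {n m o : ℕ} {A : Matrix (Fin n) (Fin n) ℝ} (B : Matrix (Fin n) (Fin m) ℝ)
    {H : Matrix (Fin o) (Fin n) ℝ} {Z : Set (Fin o → ℝ)} {U : Set (Fin m → ℝ)} {ibar : ℕ}
    (hobs : ObservableWithin A H ibar) (hZ : IsBounded Z) (hU : IsBounded U) :
    IsBounded (reachSet A B H Z U ibar) ∧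
    (∀ l : Fin n ⊕ Fin n,
      BddAbove ((fun x => Hrow n l ⬝ᵥ x) '' reachSet A B H Z U ibar)) ∧
    IsCompact (Xbar A B H Z U ibar) ∧
    (∀ (kund : ℕ) (xb : ℕ → Fin n → ℝ) (ub : ℕ → Fin m → ℝ),
      (∀ k ≥ kund, xb (k + 1) = A *ᵥ xb k + B *ᵥ ub k) →
      (∀ k ≥ kund, ub k ∈ U) →
      (∀ k ≥ kund, H *ᵥ xb k ∈ Z) →
      ∀ k ≥ kund, xb k ∈ Xbar A B H Z U ibar) := by
  have hS : IsBounded (reachSet A B H Z U ibar) := isBounded_reachSet hobs hZ hU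
  refine ⟨hS, fun l => bddAbove_image_dotProduct hS (Hrow n l), isCompact_Xbar, ?_⟩
  intro kund xb ub hx hu hz k hk
  exact reachSet_subset_Xbar hS <| mem_reachSet_of_forall_ge
    (fun i hi => hx i (hk.trans hi)) (fun i hi => hu i (hk.trans hi))
    fun i hi => hz i (hk.trans hi)

/-- **Proposition 1.** If the observability matrix
`𝒪 = [Hᵀ, (HA)ᵀ, …, (HA^{n-1})ᵀ]ᵀ` has full column rank, `Z` and `U` are compact
and `ī ≥ n - 1`, then (i) the set `S` of admissible initial states is bounded,
each coordinate supremum is finite (the image sets are bounded above), and the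
hyper-rectangle `X̄` is compact; and (ii) every trajectory
`x̄_{k+1} = A x̄_k + B ū_k` with `ū_k ∈ U` and `H x̄_k ∈ Z` for all `k ≥ k̲`
satisfies `x̄_k ∈ X̄` for all `k ≥ k̲`. -/
theorem prop_Xbar
    (n m o : ℕ)
    (A : Matrix (Fin n) (Fin n) ℝ) (B : Matrix (Fin n) (Fin m) ℝ)
    (H : Matrix (Fin o) (Fin n) ℝ)
    (hobs : (Matrix.of fun (p : Fin n × Fin o) (j : Fin n) =>
      (H * A ^ (p.1 : ℕ)) p.2 j).rank = n)
    (Z : Set (Fin o → ℝ)) (U : Set (Fin m → ℝ))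
    (hZ : IsCompact Z) (hU : IsCompact U)
    (ibar : ℕ) (hibar : n - 1 ≤ ibar) :
    Bornology.IsBounded (reachSet A B H Z U ibar) ∧
    (∀ l : Fin n ⊕ Fin n,
      BddAbove ((fun x => Hrow n l ⬝ᵥ x) '' reachSet A B H Z U ibar)) ∧
    IsCompact (Xbar A B H Z U ibar) ∧
    (∀ (kund : ℕ) (xb : ℕ → Fin n → ℝ) (ub : ℕ → Fin m → ℝ),
      (∀ k ≥ kund, xb (k + 1) = A.mulVec (xb k) + B.mulVec (ub k)) →
      (∀ k ≥ kund, ub k ∈ U) →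
      (∀ k ≥ kund, H.mulVec (xb k) ∈ Z) →
      ∀ k ≥ kund, xb k ∈ Xbar A B H Z U ibar) :=
  prop_Xbar_general B (observableWithin_of_rank_observabilityMatrix
      (hobs.trans (Fintype.card_fin n).symm) hibar)
    hZ.isBounded hU.isBounded
end

section
/- Let $A_\epsilon \in \mathbb{R}^{N \times N}$, $B_\epsilon \in \mathbb{R}^{N \times q}$, $G_\epsilon \in \mathbb{R}^{N \times s}$, and let $\epsilon_k, r_k, \omega_k$ satisfy $\epsilon_{k+1} = A_\epsilon \epsilon_k + B_\epsilon r_k + G_\epsilon \omega_k$ for $k \geq \underline{k}$, where $\underline{k} = k_0 - 2\tau$ for an integer $\tau \geq 1$. Let $G$ be symmetric positive definite, and suppose: $\lVert A_\epsilon^i \rVert_G \leq M\gamma^i$ for all $i \geq 0$ with $M \geq 1$, $\gamma \in (0,1)$; $\lVert \epsilon_{\underline{k}} \rVert_G \leq \eta_{\underline{k}}$; $\lVert B_\epsilon r_j \rVert_G \leq C_r$ and $\lVert G_\epsilon \omega_j \rVert_G \leq C_\omega$ for all $j \geq \underline{k}$; and $r_j \in \mathcal{R}$, $\omega_j \in \Omega$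 for all $j \geq \underline{k}$ for given sets $\mathcal{R}, \Omega$. For $\theta \in \mathbb{R}^N$, define $\Delta^{(1)}(\theta) = \lVert G^{-1/2}\theta \rVert_2 \left( M\gamma^{2\tau}\eta_{\underline{k}} + \frac{M\gamma^\tau (C_r + C_\omega)}{1-\gamma} \right)$ and $\Delta^{(2)}(\theta) = \sup \{ \theta^T \sum_{j=0}^{\tau-1} A_\epsilon^{\tau-1-j}(B_\epsilon \rho_j + G_\epsilon \sigma_j) \mid \rho_j \in \mathcal{R}, \sigma_j \in \Omega \}$. Then for every $\theta \in \mathbb{R}^N$ and every $k \geq k_0$: $\theta^T \epsilon_k \leq \Delta^{(1)}(\theta) + \Delta^{(2)}(\theta)$. -/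
open Matrix

/-- Euclidean (ℓ²) norm of a vector in `ℝⁿ`. -/
noncomputable def evNorm {n : ℕ} (x : Fin n → ℝ) : ℝ := Real.sqrt (∑ i, (x i) ^ 2)

/-- Weighted norm `‖x‖_G = √(xᵀ G x)` for a positive definite weighting matrix `G`. -/
noncomputable def normG {N : ℕ} (G : Matrix (Fin N) (Fin N) ℝ) (x : Fin N → ℝ) : ℝ :=
  Real.sqrt (x ⬝ᵥ G.mulVec x)

/-- Induced weighted matrix norm `‖A‖_G = sup_{x ≠ 0} ‖Ax‖_G / ‖x‖_G`. -/
noncomputable def matNormG {N : ℕ} (G A : Matrix (Fin N) (Fin N) ℝ) : ℝ :=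
  sSup {c | ∃ x : Fin N → ℝ, x ≠ 0 ∧ c = normG G (A.mulVec x) / normG G x}

/-!
Over the last `τ` steps the dynamics unroll to `ε_k = A^τ ε_{k-τ} + ε⁽²⁾`, where `ε⁽²⁾` collects
the `τ` most recent inputs, so that `θᵀ ε⁽²⁾` is one of the values over which `Δ⁽²⁾(θ)` is the
supremum. Unrolling `ε_{k-τ}` back to `k̲` writes `ε⁽¹⁾ = A^τ ε_{k-τ}` as a sum of terms carrying
powers of `A` of exponent at least `τ`; by `‖A^i‖_G ≤ M γ^i` and the geometric series, `‖ε⁽¹⁾‖_G`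
is at most the bracket in `Δ⁽¹⁾`. Cauchy–Schwarz, after the change of variables `x ↦ G^{1/2} x`,
converts this into the bound on `θᵀ ε⁽¹⁾`.
-/

section WeightedNorm

variable {m N : ℕ} {G A : Matrix (Fin N) (Fin N) ℝ} {x : Fin N → ℝ}

lemma evNorm_nonneg (x : Fin N → ℝ) : 0 ≤ evNorm x :=
  Real.sqrt_nonneg _

lemma evNorm_eq_norm_toLp (x : Fin N → ℝ) : evNorm x = ‖WithLp.toLp 2 x‖ := by
  simp only [evNorm, EuclideanSpace.norm_eq, Real.norm_eq_abs, sq_abs]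

lemma dotProduct_le_evNorm_mul_evNorm (x y : Fin N → ℝ) : x ⬝ᵥ y ≤ evNorm x * evNorm y := by
  have hinner : inner ℝ (WithLp.toLp 2 x) (WithLp.toLp 2 y) = x ⬝ᵥ y := by
    rw [EuclideanSpace.inner_toLp_toLp, star_trivial, dotProduct_comm]
  simpa only [evNorm_eq_norm_toLp, hinner] using
    real_inner_le_norm (WithLp.toLp 2 x) (WithLp.toLp 2 y)

lemma normG_nonneg (G : Matrix (Fin N) (Fin N) ℝ) (x : Fin N → ℝ) : 0 ≤ normG G x :=
  Real.sqrt_nonneg _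

lemma normG_zero (G : Matrix (Fin N) (Fin N) ℝ) : normG G 0 = 0 := by
  simp [normG]

lemma normG_transpose_mul_self (H : Matrix (Fin m) (Fin N) ℝ) (x : Fin N → ℝ) :
    normG (Hᵀ * H) x = evNorm (H *ᵥ x) := by
  rw [normG, evNorm, ← mulVec_mulVec, dotProduct_mulVec, vecMul_transpose]
  simp only [dotProduct, sq]

lemma dotProduct_le_evNorm_mul_normG {H : Matrix (Fin N) (Fin N) ℝ} (hH : IsUnit H)
    (θ x : Fin N → ℝ) : θ ⬝ᵥ x ≤ evNorm (Hᵀ⁻¹ *ᵥ θ) * normG (Hᵀ * H) x := by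
  have hdet : IsUnit H.det := H.isUnit_iff_isUnit_det.1 hH
  calc θ ⬝ᵥ x = (Hᵀ⁻¹ *ᵥ θ) ⬝ᵥ (H *ᵥ x) := by
        rw [dotProduct_mulVec, ← transpose_nonsing_inv, mulVec_transpose, vecMul_vecMul,
          nonsing_inv_mul H hdet, vecMul_one]
    _ ≤ evNorm (Hᵀ⁻¹ *ᵥ θ) * normG (Hᵀ * H) x := by
        rw [normG_transpose_mul_self]
        exact dotProduct_le_evNorm_mul_evNorm _ _

lemma normG_eq_norm (hG : G.PosSemidef) (x : Fin N → ℝ) :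
    normG G x = (G.toSeminormedAddCommGroup hG).toNorm.norm x := by
  change √(x ⬝ᵥ G *ᵥ x) = √((G *ᵥ x) ⬝ᵥ star x)
  rw [star_trivial, dotProduct_comm]

lemma normG_add_le (hG : G.PosSemidef) (x y : Fin N → ℝ) :
    normG G (x + y) ≤ normG G x + normG G y := by
  simp only [normG_eq_norm hG]
  exact @norm_add_le _ (G.toSeminormedAddCommGroup hG).toSeminormedAddGroup x y

lemma normG_sum_le {ι : Type*} (hG : G.PosSemidef) (s : Finset ι) (f : ι → Fin N → ℝ) :
    normG G (∑ i ∈ s, f i) ≤ ∑ i ∈ s, normG G (f i) :=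
  Finset.le_sum_of_subadditive (normG G) (normG_zero G).le (normG_add_le hG) s f

lemma normG_pos (hG : G.PosDef) (hx : x ≠ 0) : 0 < normG G x :=
  Real.sqrt_pos.2 (by simpa only [star_trivial] using hG.dotProduct_mulVec_pos hx)

lemma exists_forall_norm_map_le {E F : Type*} [NormedAddCommGroup E] [NormedSpace ℝ E]
    [FiniteDimensional ℝ E] [SeminormedAddCommGroup F] [NormedSpace ℝ F] (f : E →ₗ[ℝ] F) :
    ∃ c : ℝ, ∀ x, ‖f x‖ ≤ c * ‖x‖ :=
  ⟨‖f.toContinuousLinearMap‖, f.toContinuousLinearMap.le_opNorm⟩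

lemma exists_forall_normG_mulVec_le (hG : G.PosDef) (A : Matrix (Fin N) (Fin N) ℝ) :
    ∃ c : ℝ, ∀ x, normG G (A *ᵥ x) ≤ c * normG G x := by
  simp only [normG_eq_norm hG.posSemidef]
  -- The instances are explicit because `Fin N → ℝ` carries the sup norm by default.
  exact @exists_forall_norm_map_le _ _ (G.toNormedAddCommGroup hG)
    (G.toInnerProductSpace hG.posSemidef).toNormedSpace _ (G.toSeminormedAddCommGroup hG.posSemidef)
    (G.toInnerProductSpace hG.posSemidef).toNormedSpace A.mulVecLin

lemma matNormG_nonneg (G A : Matrix (Fin N) (Fin N) ℝ) : 0 ≤ matNormG G A := by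
  refine Real.sSup_nonneg ?_
  rintro _ ⟨x, -, rfl⟩
  exact div_nonneg (normG_nonneg G _) (normG_nonneg G x)

lemma normG_mulVec_le (hG : G.PosDef) (A : Matrix (Fin N) (Fin N) ℝ) (x : Fin N → ℝ) :
    normG G (A *ᵥ x) ≤ matNormG G A * normG G x := by
  rcases eq_or_ne x 0 with rfl | hx
  · simp only [mulVec_zero, normG_zero, mul_zero, le_refl]
  obtain ⟨c, hc⟩ := exists_forall_normG_mulVec_le hG A
  have hbdd : BddAbove {c | ∃ x : Fin N → ℝ, x ≠ 0 ∧ c = normG G (A *ᵥ x) / normG G x} := by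
    refine ⟨c, ?_⟩
    rintro _ ⟨y, hy, rfl⟩
    exact (div_le_iff₀ (normG_pos hG hy)).2 (hc y)
  exact (div_le_iff₀ (normG_pos hG hx)).1 (le_csSup hbdd ⟨x, hx, rfl⟩)

lemma normG_mulVec_le_of_le {a b : ℝ} (hG : G.PosDef) (hA : matNormG G A ≤ a)
    (hx : normG G x ≤ b) : normG G (A *ᵥ x) ≤ a * b :=
  (normG_mulVec_le hG A x).trans
    (mul_le_mul hA hx (normG_nonneg G x) ((matNormG_nonneg G A).trans hA))

lemma nonneg_of_forall_matNormG_pow_le {M γ : ℝ}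
    (hA : ∀ i : ℕ, matNormG G (A ^ i) ≤ M * γ ^ i) : 0 ≤ M := by
  simpa only [pow_zero, mul_one] using (matNormG_nonneg G (A ^ 0)).trans (hA 0)

end WeightedNorm

section Dynamics

lemma eq_pow_mulVec_add_sum_of_recurrence {n α : Type*} [Fintype n] [DecidableEq n] [Semiring α]
    {A : Matrix n n α} {e d : ℕ → n → α} {a : ℕ}
    (hrec : ∀ k ≥ a, e (k + 1) = A *ᵥ e k + d k) (t : ℕ) :
    e (a + t) = A ^ t *ᵥ e a + ∑ j ∈ Finset.range t, A ^ (t - 1 - j) *ᵥ d (a + j) := by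
  induction t with
  | zero => simp
  | succ t ih =>
    have hshift : ∀ j ∈ Finset.range t,
        A *ᵥ A ^ (t - 1 - j) *ᵥ d (a + j) = A ^ (t + 1 - 1 - j) *ᵥ d (a + j) := by
      intro j hj
      have hexp : t + 1 - 1 - j = t - 1 - j + 1 := by grind
      rw [mulVec_mulVec, ← pow_succ', hexp]
    rw [← add_assoc, hrec _ (Nat.le_add_right a t), ih, Finset.sum_range_succ, mulVec_add,
      mulVec_sum, Finset.sum_congr rfl hshift, mulVec_mulVec, ← pow_succ', add_assoc]
    simp only [add_tsub_cancel_right, tsub_self, pow_zero, one_mulVec]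

lemma geom_sum_le_inv_one_sub {γ : ℝ} (hγ0 : 0 ≤ γ) (hγ1 : γ < 1) (n : ℕ) :
    ∑ i ∈ Finset.range n, γ ^ i ≤ (1 - γ)⁻¹ :=
  tsum_geometric_of_lt_one hγ0 hγ1 ▸
    (summable_geometric_of_lt_one hγ0 hγ1).sum_le_tsum _ fun i _ => pow_nonneg hγ0 i

lemma normG_pow_mulVec_le_of_recurrence {N : ℕ} {G A : Matrix (Fin N) (Fin N) ℝ}
    {e d : ℕ → Fin N → ℝ} {a : ℕ} {M γ η C : ℝ} (hG : G.PosDef)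
    (hrec : ∀ k ≥ a, e (k + 1) = A *ᵥ e k + d k) (hγ0 : 0 ≤ γ) (hγ1 : γ < 1)
    (hA : ∀ i, matNormG G (A ^ i) ≤ M * γ ^ i) (hη : normG G (e a) ≤ η)
    (hC : ∀ k ≥ a, normG G (d k) ≤ C) (t n : ℕ) :
    normG G (A ^ t *ᵥ e (a + n)) ≤ M * γ ^ (t + n) * η + M * γ ^ t * C / (1 - γ) := by
  have hM : 0 ≤ M := nonneg_of_forall_matNormG_pow_le hA
  have hC0 : 0 ≤ C := (normG_nonneg G _).trans (hC a le_rfl)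
  have hinput : ∀ j, normG G (A ^ (t + (n - 1 - j)) *ᵥ d (a + j)) ≤
      M * γ ^ t * C * γ ^ (n - 1 - j) := fun j =>
    (normG_mulVec_le_of_le hG (hA _) (hC _ (Nat.le_add_right a j))).trans_eq (by ring)
  calc normG G (A ^ t *ᵥ e (a + n))
      = normG G (A ^ (t + n) *ᵥ e a +
          ∑ j ∈ Finset.range n, A ^ (t + (n - 1 - j)) *ᵥ d (a + j)) := by
        simp only [eq_pow_mulVec_add_sum_of_recurrence hrec n, mulVec_add, mulVec_sum,
          mulVec_mulVec, ← pow_add]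
    _ ≤ normG G (A ^ (t + n) *ᵥ e a) +
          ∑ j ∈ Finset.range n, normG G (A ^ (t + (n - 1 - j)) *ᵥ d (a + j)) :=
        (normG_add_le hG.posSemidef _ _).trans (by gcongr; exact normG_sum_le hG.posSemidef _ _)
    _ ≤ M * γ ^ (t + n) * η + ∑ j ∈ Finset.range n, M * γ ^ t * C * γ ^ (n - 1 - j) :=
        add_le_add (normG_mulVec_le_of_le hG (hA _) hη) (Finset.sum_le_sum fun j _ => hinput j)
    _ = M * γ ^ (t + n) * η + M * γ ^ t * C * ∑ j ∈ Finset.range n, γ ^ j := by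
        rw [← Finset.mul_sum, Finset.sum_range_reflect (γ ^ ·) n]
    _ ≤ M * γ ^ (t + n) * η + M * γ ^ t * C / (1 - γ) := by
        rw [div_eq_mul_inv]
        gcongr
        exact geom_sum_le_inv_one_sub hγ0 hγ1 n

end Dynamics

section RecentInputs

variable {n ι κ : Type*} [Fintype n] [DecidableEq n] [Fintype ι] [Fintype κ]

/-- The possible values of `θᵀ ε⁽²⁾`, the contribution to `θᵀ ε_k` of the `τ` most recent inputs,
when these range over `R` and `Ω`; the paper's `Δ⁽²⁾(θ)` is its supremum. The input sequences are
indexed by all of `ℕ`, but only their first `τ` entries matter. -/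
def recentErrorValues (A : Matrix n n ℝ) (B : Matrix n ι ℝ) (E : Matrix n κ ℝ)
    (R : Set (ι → ℝ)) (Ω : Set (κ → ℝ)) (τ : ℕ) (θ : n → ℝ) : Set ℝ :=
  {c | ∃ ρ : ℕ → ι → ℝ, ∃ σ : ℕ → κ → ℝ, (∀ j < τ, ρ j ∈ R) ∧ (∀ j < τ, σ j ∈ Ω) ∧
    c = θ ⬝ᵥ ∑ j ∈ Finset.range τ, (A ^ (τ - 1 - j)) *ᵥ (B *ᵥ ρ j + E *ᵥ σ j)}

lemma bddAbove_recentErrorValues {R : Set (ι → ℝ)} {Ω : Set (κ → ℝ)}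
    (hR : Bornology.IsBounded R) (hΩ : Bornology.IsBounded Ω) (A : Matrix n n ℝ)
    (B : Matrix n ι ℝ) (E : Matrix n κ ℝ) (τ : ℕ) (θ : n → ℝ) :
    BddAbove (recentErrorValues A B E R Ω τ θ) := by
  have hterm (i : ℕ) : ∃ b : ℝ, ∀ x ∈ R, ∀ y ∈ Ω, θ ⬝ᵥ A ^ i *ᵥ (B *ᵥ x + E *ᵥ y) ≤ b := by
    have hcont : Continuous fun p : (ι → ℝ) × (κ → ℝ) =>
        θ ⬝ᵥ A ^ i *ᵥ (B *ᵥ p.1 + E *ᵥ p.2) := by fun_prop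
    obtain ⟨b, hb⟩ := (hR.prod hΩ).isCompact_closure.bddAbove_image hcont.continuousOn
    exact ⟨b, fun x hx y hy => hb ⟨(x, y), subset_closure ⟨hx, hy⟩, rfl⟩⟩
  choose b hb using hterm
  refine ⟨∑ j ∈ Finset.range τ, b (τ - 1 - j), ?_⟩
  rintro _ ⟨ρ, σ, hρ, hσ, rfl⟩
  rw [dotProduct_sum]
  refine Finset.sum_le_sum fun j hj => ?_
  have hjτ : j < τ := Finset.mem_range.1 hj
  exact hb _ _ (hρ j hjτ) _ (hσ j hjτ)

end RecentInputs

theorem error_bound_tracking_general {N : ℕ} {ι κ : Type*} [Fintype ι] [Fintype κ]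
    {A G H : Matrix (Fin N) (Fin N) ℝ} {B : Matrix (Fin N) ι ℝ} {E : Matrix (Fin N) κ ℝ}
    {a τ : ℕ} {ε : ℕ → Fin N → ℝ} {r : ℕ → ι → ℝ} {ω : ℕ → κ → ℝ}
    (hdyn : ∀ k ≥ a, ε (k + 1) = A *ᵥ ε k + B *ᵥ r k + E *ᵥ ω k)
    (hH : H.PosDef) (hHG : H * H = G) {M γ η Cr Cω : ℝ} (hγ0 : 0 ≤ γ) (hγ1 : γ < 1)
    (hA : ∀ i, matNormG G (A ^ i) ≤ M * γ ^ i) (hη : normG G (ε a) ≤ η)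
    (hCr : ∀ j ≥ a, normG G (B *ᵥ r j) ≤ Cr) (hCω : ∀ j ≥ a, normG G (E *ᵥ ω j) ≤ Cω)
    {R : Set (ι → ℝ)} {Ω : Set (κ → ℝ)} (hrR : ∀ j ≥ a, r j ∈ R) (hωΩ : ∀ j ≥ a, ω j ∈ Ω)
    {θ : Fin N → ℝ} (hbdd : BddAbove (recentErrorValues A B E R Ω τ θ))
    {k : ℕ} (hk : a + 2 * τ ≤ k) :
    θ ⬝ᵥ ε k ≤
      evNorm (H⁻¹ *ᵥ θ) * (M * γ ^ (2 * τ) * η + M * γ ^ τ * (Cr + Cω) / (1 - γ)) +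
        sSup (recentErrorValues A B E R Ω τ θ) := by
  have hHt : Hᵀ = H := by simpa only [conjTranspose_eq_transpose_of_trivial] using hH.isHermitian.eq
  have hG : G.PosDef := by
    simpa only [hH.isHermitian.eq, hHG] using
      PosDef.conjTranspose_mul_self H (mulVec_injective_iff_isUnit.2 hH.isUnit)
  have hrec : ∀ k ≥ a, ε (k + 1) = A *ᵥ ε k + (B *ᵥ r k + E *ᵥ ω k) := fun k hk => by
    rw [hdyn k hk, add_assoc]
  have hinput : ∀ k ≥ a, normG G (B *ᵥ r k + E *ᵥ ω k) ≤ Cr + Cω := fun k hk =>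
    (normG_add_le hG.posSemidef _ _).trans (add_le_add (hCr k hk) (hCω k hk))
  obtain ⟨n, rfl, hn⟩ : ∃ n, k = a + n + τ ∧ τ ≤ n := ⟨k - a - τ, by omega, by omega⟩
  have hM : 0 ≤ M := nonneg_of_forall_matNormG_pow_le hA
  have hη0 : 0 ≤ η := (normG_nonneg G _).trans hη
  have hpow : γ ^ (τ + n) ≤ γ ^ (2 * τ) := pow_le_pow_of_le_one hγ0 hγ1.le (by omega)
  have hold : normG G (A ^ τ *ᵥ ε (a + n)) ≤
      M * γ ^ (2 * τ) * η + M * γ ^ τ * (Cr + Cω) / (1 - γ) :=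
    (normG_pow_mulVec_le_of_recurrence hG hrec hγ0 hγ1 hA hη hinput τ n).trans (by gcongr)
  have hdual : θ ⬝ᵥ A ^ τ *ᵥ ε (a + n) ≤ evNorm (H⁻¹ *ᵥ θ) * normG G (A ^ τ *ᵥ ε (a + n)) := by
    simpa only [hHt, hHG] using dotProduct_le_evNorm_mul_normG hH.isUnit θ (A ^ τ *ᵥ ε (a + n))
  rw [eq_pow_mulVec_add_sum_of_recurrence (fun k hk => hrec k (by omega)) τ, dotProduct_add]
  refine add_le_add (hdual.trans (mul_le_mul_of_nonneg_left hold (evNorm_nonneg _))) ?_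
  exact le_csSup hbdd ⟨fun j => r (a + n + j), fun j => ω (a + n + j),
    fun j _ => hrR _ (by omega), fun j _ => hωΩ _ (by omega), rfl⟩

/-- **Error bound for constraint tightening (Section VI, Theorem 3 ingredient).**
For the error dynamics `ε_{k+1} = A_ε ε_k + B_ε r_k + G_ε ω_k` (for `k ≥ k̲`,
`k̲ = k₀ - 2τ`), with `‖A_ε^i‖_G ≤ M γ^i`, `‖ε_k̲‖_G ≤ η_k̲`,
`‖B_ε r_j‖_G ≤ C_r`, `‖G_ε ω_j‖_G ≤ C_ω` and `r_j ∈ R`, `ω_j ∈ Ω` for all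
`j ≥ k̲`, it holds for every row vector `θ` and every `k ≥ k₀` that
`θᵀ ε_k ≤ Δ⁽¹⁾(θ) + Δ⁽²⁾(θ)`, where
`Δ⁽¹⁾(θ) = ‖G^{-1/2}θ‖₂ (M γ^{2τ} η_k̲ + M γ^τ (C_r + C_ω)/(1-γ))` and
`Δ⁽²⁾(θ) = sup {θᵀ ∑_{j=0}^{τ-1} A_ε^{τ-1-j}(B_ε ρ_j + G_ε σ_j) : ρ_j ∈ R, σ_j ∈ Ω}`.
Here `G^{1/2}` is the positive definite square root of `G`, provided as `Ghalf`. -/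
theorem error_bound_tracking
    (N q s : ℕ)
    (Aeps : Matrix (Fin N) (Fin N) ℝ) (Beps : Matrix (Fin N) (Fin q) ℝ)
    (Geps : Matrix (Fin N) (Fin s) ℝ)
    (kund τ k₀ : ℕ) (hτ : 1 ≤ τ) (hk₀ : k₀ = kund + 2 * τ)
    (ε : ℕ → Fin N → ℝ) (r : ℕ → Fin q → ℝ) (ω : ℕ → Fin s → ℝ)
    (hdyn : ∀ k ≥ kund, ε (k + 1) = Aeps.mulVec (ε k) + Beps.mulVec (r k) + Geps.mulVec (ω k))
    (G : Matrix (Fin N) (Fin N) ℝ) (hGsymm : G.IsSymm) (hGpd : G.PosDef)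
    (Ghalf : Matrix (Fin N) (Fin N) ℝ) (hGhalfpd : Ghalf.PosDef)
    (hGhalfsq : Ghalf * Ghalf = G)
    (M γ : ℝ) (hM : 1 ≤ M) (hγ : 0 < γ ∧ γ < 1)
    (hA : ∀ i : ℕ, matNormG G (Aeps ^ i) ≤ M * γ ^ i)
    (η : ℝ) (hinit : normG G (ε kund) ≤ η)
    (Cr Cω : ℝ)
    (hCr : ∀ j ≥ kund, normG G (Beps.mulVec (r j)) ≤ Cr)
    (hCω : ∀ j ≥ kund, normG G (Geps.mulVec (ω j)) ≤ Cω)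
    (R : Set (Fin q → ℝ)) (Ω : Set (Fin s → ℝ))
    (hR : IsCompact R) (hΩ : IsCompact Ω)
    (hrR : ∀ j ≥ kund, r j ∈ R) (hωΩ : ∀ j ≥ kund, ω j ∈ Ω) :
    ∀ θ : Fin N → ℝ, ∀ k ≥ k₀,
      θ ⬝ᵥ ε k ≤
        evNorm (Ghalf⁻¹.mulVec θ) *
          (M * γ ^ (2 * τ) * η + M * γ ^ τ * (Cr + Cω) / (1 - γ)) +
        sSup {c | ∃ ρ : ℕ → Fin q → ℝ, ∃ σ : ℕ → Fin s → ℝ,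
          (∀ j < τ, ρ j ∈ R) ∧ (∀ j < τ, σ j ∈ Ω) ∧
          c = θ ⬝ᵥ ∑ j ∈ Finset.range τ,
            (Aeps ^ (τ - 1 - j)).mulVec (Beps.mulVec (ρ j) + Geps.mulVec (σ j))} := by
  subst hk₀
  exact fun θ k hk => error_bound_tracking_general hdyn hGhalfpd hGhalfsq hγ.1.le hγ.2 hA hinit hCr
    hCω hrR hωΩ (bddAbove_recentErrorValues hR.isBounded hΩ.isBounded Aeps Beps Geps τ θ) hk
end
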